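/- For every natural number m there exists a finite connected acyclic simple graph (a tree) T with treewidth at most 1 and pathwidth at least m; in particular, the difference pw(T) − tw(T) can be made arbitrarily large over trees. -/

import Mathlib

open SimpleGraph

/-- `bag` is a tree decomposition of the graph `G`, modeled on the graph `T`:
(1) every vertex of `G` lies in some bag, (2) both endpoints of every edge of `G`
lie in a common bag, and (3) for every vertex `v` of `G`, the set of nodes whose
bag contains `v` induces a connected (in particular, nonempty) subgraph of `T`. -/
def IsTreeDecomposition {V ι : Type*} (G : SimpleGraph V) (T : SimpleGraph ι)
    (bag : ι → Finset V) : Prop :=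
  (∀ v : V, ∃ i, v ∈ bag i) ∧
  (∀ u v : V, G.Adj u v → ∃ i, u ∈ bag i ∧ v ∈ bag i) ∧
  (∀ v : V, (T.induce {i | v ∈ bag i}).Connected)

/-- The width of a decomposition: the maximal bag size minus one. -/
def decompWidth {ι V : Type*} [Fintype ι] (bag : ι → Finset V) : ℕ :=
  (Finset.univ.sup fun i => (bag i).card) - 1

/-- `G` admits a tree decomposition (modeled on a tree) of width at most `k`. -/
def HasTreeDecompWidthLE {V : Type*} (G : SimpleGraph V) (k : ℕ) : Prop :=
  ∃ (n : ℕ) (T : SimpleGraph (Fin n)) (bag : Fin n → Finset V),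
    T.IsTree ∧ IsTreeDecomposition G T bag ∧ decompWidth bag ≤ k

/-- `G` admits a path decomposition (a tree decomposition modeled on a path graph)
of width at most `k`. -/
def HasPathDecompWidthLE {V : Type*} (G : SimpleGraph V) (k : ℕ) : Prop :=
  ∃ (n : ℕ) (bag : Fin n → Finset V),
    IsTreeDecomposition G (pathGraph n) bag ∧ decompWidth bag ≤ k

/-- The treewidth of `G`: the minimum width of a tree decomposition of `G`. -/
noncomputable def treewidth {V : Type*} (G : SimpleGraph V) : ℕ :=
  sInf {k | HasTreeDecompWidthLE G k}

/-- The pathwidth of `G`: the minimum width of a path decomposition of `G`. -/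
noncomputable def pathwidth {V : Type*} (G : SimpleGraph V) : ℕ :=
  sInf {k | HasPathDecompWidthLE G k}

/-- The infinite rooted tree on lists, in which the parent of `a :: l` is `l`. -/
def listTree (α : Type*) : SimpleGraph (List α) where
  Adj l l' := (∃ a, l' = a :: l) ∨ ∃ a, l = a :: l'
  symm := ⟨fun _ _ h => h.symm⟩
  loopless := ⟨fun l h => by
    rcases h with ⟨a, h⟩ | ⟨a, h⟩ <;> simpa using congrArg List.length h⟩

theorem listTree_adj {α : Type*} {l l' : List α} :
    (listTree α).Adj l l' ↔ (∃ a, l' = a :: l) ∨ ∃ a, l = a :: l' := Iff.rfl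

/-- A set of vertices closed under adjacency is closed under reachability. -/
theorem SimpleGraph.Reachable.of_adj_closed {V : Type*} {G : SimpleGraph V} {P : V → Prop}
    (hP : ∀ u v, G.Adj u v → P u → P v) {u v : V} (h : G.Reachable u v) (hu : P u) : P v := by
  obtain ⟨w⟩ := h
  induction w with
  | nil => exact hu
  | cons hadj _ ih => exact ih (hP _ _ hadj hu)

theorem listTree_isAcyclic (α : Type*) : (listTree α).IsAcyclic := by
  have key : ∀ (l : List α) (a : α),
      ¬ ((listTree α).deleteEdges {s(l, a :: l)}).Reachable (a :: l) l := by
    intro l a h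
    have hs : a :: l <:+ l := by
      refine h.of_adj_closed (P := fun x => a :: l <:+ x) ?_ List.suffix_rfl
      intro x y hxy hx
      rw [deleteEdges_adj, listTree_adj] at hxy
      obtain ⟨⟨b, rfl⟩ | ⟨b, rfl⟩, hne⟩ := hxy
      · exact hx.trans (List.suffix_cons _ _)
      · rcases List.suffix_cons_iff.1 hx with h | h
        · obtain ⟨rfl, rfl⟩ := List.cons_eq_cons.1 h
          simp [Sym2.eq_swap] at hne
        · exact h
    simpa using hs.length_le
  rw [isAcyclic_iff_forall_adj_isBridge]
  intro x y hxy
  rw [isBridge_iff]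
  rcases listTree_adj.1 hxy with ⟨a, rfl⟩ | ⟨a, rfl⟩
  · exact fun h => key x a h.symm
  · exact fun h => key y a (by rwa [Sym2.eq_swap])

section Labelled

variable {α V : Type*} {f : V → List α}

theorem connected_comap_listTree (hf : Function.Injective f) {root : V} (hroot : f root = [])
    {parent : V → V} (hparent : ∀ v, f (parent v) = (f v).tail) :
    ((listTree α).comap f).Connected := by
  have key : ∀ (l : List α) (v : V), f v = l → ((listTree α).comap f).Reachable v root := by
    intro l
    induction l with
    | nil => intro v hv; rw [hf (hv.trans hroot.symm)]
    | cons a l ih =>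
      intro v hv
      have hp : f (parent v) = l := by rw [hparent, hv, List.tail_cons]
      have hadj : ((listTree α).comap f).Adj v (parent v) := Or.inr ⟨a, by rw [hv, hp]⟩
      exact hadj.reachable.trans (ih _ hp)
  have : Nonempty V := ⟨root⟩
  exact ⟨fun u v => (key _ u rfl).trans (key _ v rfl).symm⟩

/-- The bags `{v, parent v}` form a tree decomposition modelled on the tree itself. -/
theorem isTreeDecomposition_parent [DecidableEq V] (hf : Function.Injective f) {parent : V → V}
    (hparent : ∀ v, f (parent v) = (f v).tail) :
    IsTreeDecomposition ((listTree α).comap f) ((listTree α).comap f)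
      fun v => {v, parent v} := by
  have hadj : ∀ u v, (∃ a, f v = a :: f u) → parent v = u := by
    rintro u v ⟨a, h⟩
    exact hf (by rw [hparent, h, List.tail_cons])
  refine ⟨fun v => ⟨v, by simp⟩, ?_, ?_⟩
  · rintro u v (h | h)
    · exact ⟨v, by simp [hadj u v h]⟩
    · exact ⟨u, by simp [hadj v u h]⟩
  · intro u
    have key : ∀ v : {v | u ∈ ({v, parent v} : Finset V)},
        (((listTree α).comap f).induce {v | u ∈ ({v, parent v} : Finset V)}).Reachable v
          ⟨u, by simp⟩ := by
      rintro ⟨v, hv⟩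
      rcases eq_or_ne v u with rfl | hne
      · rfl
      · have hp : parent v = u := by
          have : u = v ∨ u = parent v := by simpa using hv
          exact (this.resolve_left hne.symm).symm
        refine Adj.reachable (Or.inr ?_)
        change ∃ a, f v = a :: f u
        have hfu : f u = (f v).tail := by rw [← hp, hparent]
        cases hl : f v with
        | nil => exact absurd (hf (by rw [hl, hfu, hl, List.tail_nil])) hne
        | cons a l => exact ⟨a, by rw [hfu, hl, List.tail_cons]⟩
    have : Nonempty {v | u ∈ ({v, parent v} : Finset V)} := ⟨⟨u, by simp⟩⟩
    exact ⟨fun v w => (key v).trans (key w).symm⟩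

end Labelled

/-- In a path decomposition, the nodes whose bag contains a given vertex form an interval. -/
theorem IsTreeDecomposition.mem_bag_of_le_of_le {V : Type*} {G : SimpleGraph V} {n : ℕ}
    {bag : Fin n → Finset V} (h : IsTreeDecomposition G (pathGraph n) bag) {v : V}
    {i j k : Fin n} (hij : i ≤ j) (hjk : j ≤ k) (hi : v ∈ bag i) (hk : v ∈ bag k) :
    v ∈ bag j := by
  by_contra hj
  have hlt : k < j := by
    refine ((h.2.2 v).preconnected ⟨i, hi⟩ ⟨k, hk⟩).of_adj_closed
      (P := fun x => x.1 < j) ?_ (lt_of_le_of_ne hij (by rintro rfl; exact hj hi))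
    rintro ⟨x, hx⟩ ⟨y, hy⟩ hxy hxj
    have hxy' : (pathGraph n).Adj x y := hxy
    rw [pathGraph_adj] at hxy'
    have hyj : y ≠ j := by rintro rfl; exact hj hy
    simp only [Fin.lt_def, ne_eq, Fin.ext_iff] at *
    omega
  exact absurd hjk (not_le.2 hlt)

/-- Among three elements of a linear order, one lies between the two others. -/
theorem exists_between_fin_three {β : Type*} [LinearOrder β] (g : Fin 3 → β) :
    ∃ a b c : Fin 3, a ≠ b ∧ c ≠ b ∧ g a ≤ g b ∧ g b ≤ g c := by
  rcases le_total (g 0) (g 1) with h₁ | h₁ <;> rcases le_total (g 1) (g 2) with h₂ | h₂ <;>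
    rcases le_total (g 0) (g 2) with h₃ | h₃
  · exact ⟨0, 1, 2, by decide, by decide, h₁, h₂⟩
  · exact ⟨0, 1, 2, by decide, by decide, h₁, h₂⟩
  · exact ⟨0, 2, 1, by decide, by decide, h₃, h₂⟩
  · exact ⟨2, 0, 1, by decide, by decide, h₃, h₁⟩
  · exact ⟨1, 0, 2, by decide, by decide, h₁, h₃⟩
  · exact ⟨1, 2, 0, by decide, by decide, h₂, h₃⟩
  · exact ⟨2, 1, 0, by decide, by decide, h₂, h₁⟩
  · exact ⟨2, 1, 0, by decide, by decide, h₂, h₁⟩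

section PathDecomposition

variable {α V : Type*} {f : V → List α} {n : ℕ} {bag : Fin n → Finset V}

/-- If the bag at `j` avoids the part of the tree below `u` but outside the branch `b :: f u`,
then all vertices of that part occur on the same side of `j` as `u`. -/
theorem exists_lt_mem_bag_iff (hf : Function.Injective f) {parent : V → V}
    (hparent : ∀ v, f (parent v) = (f v).tail)
    (h : IsTreeDecomposition ((listTree α).comap f) (pathGraph n) bag) {u : V} {b : α}
    {j : Fin n} (havoid : ∀ v ∈ bag j, f u <:+ f v → b :: f u <:+ f v) {v : V}
    (huv : f u <:+ f v) (hbv : ¬ b :: f u <:+ f v) :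
    (∃ i < j, v ∈ bag i) ↔ ∃ i < j, u ∈ bag i := by
  generalize hl : f v = l at huv hbv
  induction l generalizing v with
  | nil =>
    rw [List.suffix_nil] at huv
    rw [hf (hl.trans huv.symm)]
  | cons a l ih =>
    rcases List.suffix_cons_iff.1 huv with heq | hul
    · rw [hf (hl.trans heq.symm)]
    · have hp : f (parent v) = l := by rw [hparent, hl, List.tail_cons]
      have hbl : ¬ b :: f u <:+ l := fun hb => hbv (hb.trans (List.suffix_cons _ _))
      rw [← ih hp hul hbl]
      obtain ⟨k, hvk, hpk⟩ := h.2.1 v (parent v) (Or.inr ⟨a, by rw [hl, hp]⟩)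
      have hvj : v ∉ bag j := fun hv => hbv (hl ▸ havoid v hv (hl ▸ huv))
      have hpj : parent v ∉ bag j := fun hv => hbl (hp ▸ havoid _ hv (hp ▸ hul))
      have transfer : ∀ x y : V, x ∉ bag j → x ∈ bag k → y ∈ bag k →
          (∃ i < j, x ∈ bag i) → ∃ i < j, y ∈ bag i := by
        rintro x y hxj hxk hyk ⟨i, hij, hi⟩
        refine ⟨k, ?_, hyk⟩
        by_contra! hjk
        exact hxj (h.mem_bag_of_le_of_le hij.le hjk hi hxk)
      exact ⟨transfer _ _ hvj hvk hpk, transfer _ _ hpj hpk hvk⟩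

/-- A path decomposition of a graph containing a complete ternary tree of height `d` below `l`
has a bag with more than `d` vertices of that tree. -/
theorem exists_bag_card_gt {f : V → List (Fin 3)} (hf : Function.Injective f)
    {m : ℕ} (hrange : ∀ l : List (Fin 3), l.length ≤ m → ∃ v, f v = l) {parent : V → V}
    (hparent : ∀ v, f (parent v) = (f v).tail)
    (h : IsTreeDecomposition ((listTree (Fin 3)).comap f) (pathGraph n) bag)
    (d : ℕ) (l : List (Fin 3)) (hl : l.length + d ≤ m) :
    ∃ i, d < ((bag i).filter fun v => l <:+ f v).card := by
  induction d generalizing l with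
  | zero =>
    obtain ⟨v, rfl⟩ := hrange l hl
    obtain ⟨i, hi⟩ := h.1 v
    exact ⟨i, Finset.card_pos.2 ⟨v, by simp [hi]⟩⟩
  | succ d ih =>
    have hbranch : ∀ a : Fin 3, ∃ i, d < ((bag i).filter fun v => a :: l <:+ f v).card :=
      fun a => ih (a :: l) (by rw [List.length_cons]; omega)
    choose g hg using hbranch
    obtain ⟨a, b, c, hab, hcb, hgab, hgbc⟩ := exists_between_fin_three g
    refine ⟨g b, ?_⟩
    suffices hout : ∃ v ∈ bag (g b), l <:+ f v ∧ ¬ b :: l <:+ f v by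
      obtain ⟨v, hv, hlv, hbv⟩ := hout
      refine (Nat.succ_lt_succ (hg b)).trans_le (Finset.card_lt_card ?_)
      refine Finset.ssubset_iff_of_subset ?_ |>.2 ⟨v, by simp [hv, hlv], by simp [hbv]⟩
      intro x hx
      rw [Finset.mem_filter] at hx ⊢
      exact ⟨hx.1, (List.suffix_cons _ _).trans hx.2⟩
    by_contra! havoid
    obtain ⟨u, rfl⟩ := hrange l (by omega)
    have hoff : ∀ e : Fin 3, e ≠ b → ∀ x : V, e :: f u <:+ f x → ¬ b :: f u <:+ f x := by
      intro e he x hex hbx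
      have := (List.suffix_of_suffix_length_le hex hbx (by simp)).eq_of_length (by simp)
      exact he (List.cons_eq_cons.1 this).1
    obtain ⟨x, hx⟩ := Finset.card_pos.1 ((Nat.zero_le d).trans_lt (hg a))
    obtain ⟨y, hy⟩ := Finset.card_pos.1 ((Nat.zero_le d).trans_lt (hg c))
    rw [Finset.mem_filter] at hx hy
    have hux := (List.suffix_cons a (f u)).trans hx.2
    have huy := (List.suffix_cons c (f u)).trans hy.2
    have hbx := hoff a hab x hx.2
    have hby := hoff c hcb y hy.2
    have hxside := exists_lt_mem_bag_iff hf hparent h havoid hux hbx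
    have hyside := exists_lt_mem_bag_iff hf hparent h havoid huy hby
    have hgab' : g a < g b :=
      lt_of_le_of_ne hgab fun heq => hbx (havoid x (heq ▸ hx.1) hux)
    obtain ⟨i, hi, hyi⟩ := hyside.2 (hxside.1 ⟨g a, hgab', hx.1⟩)
    exact hby (havoid y (h.mem_bag_of_le_of_le hi.le hgbc hyi hy.1) huy)

end PathDecomposition

/-- The decomposition with a single bag shows that the pathwidth of a finite graph is attained. -/
theorem exists_hasPathDecompWidthLE {V : Type*} [Fintype V] (G : SimpleGraph V) :
    ∃ k, HasPathDecompWidthLE G k := by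
  refine ⟨_, 1, fun _ => Finset.univ, ⟨fun v => ⟨0, Finset.mem_univ v⟩,
    fun u v _ => ⟨0, Finset.mem_univ u, Finset.mem_univ v⟩, fun v => ?_⟩, le_rfl⟩
  have : Nonempty {i : Fin 1 | v ∈ (Finset.univ : Finset V)} := ⟨⟨0, Finset.mem_univ v⟩⟩
  exact ⟨fun x y => by rw [Subsingleton.elim x y]⟩

/-- For every natural number `m` there is a finite tree (a connected acyclic
simple graph) whose treewidth is at most `1` and whose pathwidth is at least `m`;
in particular the difference `pathwidth - treewidth` is arbitrarily large over trees. -/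
theorem exists_tree_treewidth_le_one_pathwidth_ge (m : ℕ) :
    ∃ (n : ℕ) (T : SimpleGraph (Fin n)), T.Connected ∧ T.IsAcyclic ∧
      treewidth T ≤ 1 ∧ m ≤ pathwidth T ∧ m ≤ pathwidth T - treewidth T := by
  have hfin : Finite {l : List (Fin 3) // l.length ≤ m + 1} :=
    (List.finite_length_le (Fin 3) (m + 1)).to_subtype
  obtain ⟨n, ⟨e⟩⟩ := Finite.exists_equiv_fin {l : List (Fin 3) // l.length ≤ m + 1}
  let f : Fin n → List (Fin 3) := fun v => (e.symm v).1
  have hf : Function.Injective f := Subtype.val_injective.comp e.symm.injective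
  have hrange : ∀ l : List (Fin 3), l.length ≤ m + 1 → ∃ v, f v = l :=
    fun l hl => ⟨e ⟨l, hl⟩, by simp [f]⟩
  have hlength : ∀ v, (f v).length ≤ m + 1 := fun v => (e.symm v).2
  obtain ⟨root, hroot⟩ := hrange [] (by simp)
  choose parent hparent using fun v => hrange (f v).tail
    (by rw [List.length_tail]; exact (Nat.sub_le _ _).trans (hlength v))
  have hconn := connected_comap_listTree hf hroot hparent
  have hacyc : ((listTree (Fin 3)).comap f).IsAcyclic :=
    (listTree_isAcyclic (Fin 3)).comap (Hom.comap f _) hf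
  have htw : treewidth ((listTree (Fin 3)).comap f) ≤ 1 := by
    refine Nat.sInf_le ⟨n, _, _, ⟨hconn, hacyc⟩, isTreeDecomposition_parent hf hparent, ?_⟩
    refine Nat.sub_le_of_le_add (Finset.sup_le fun v _ => Finset.card_le_two)
  have hpw : m + 1 ≤ pathwidth ((listTree (Fin 3)).comap f) := by
    refine le_csInf (exists_hasPathDecompWidthLE _) ?_
    rintro k ⟨N, bag, hbag, hk⟩
    obtain ⟨i, hi⟩ := exists_bag_card_gt hf hrange hparent hbag (m + 1) [] (by simp)
    have hle : (bag i).card ≤ Finset.univ.sup fun i => (bag i).card :=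
      Finset.le_sup (f := fun i => (bag i).card) (Finset.mem_univ i)
    have hfilter := Finset.card_filter_le (bag i) fun v => [] <:+ f v
    unfold decompWidth at hk
    omega
  exact ⟨n, _, hconn, hacyc, htw, by omega, by omega⟩
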